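/- arXiv:1806.04442 — 3 statements merged into one kernel-verified Lean document; each statement's English description precedes it below -/
import Mathlib

section
/- Let E be an additive commutative group, let F, G : E → E, and let u⁰ ∈ E. Define the parareal iterates by u₀ⁿ⁺¹ = G(u₀ⁿ) with u₀⁰ = u⁰, and u_{k+1}^{n+1} = G(u_{k+1}^n) + F(u_k^n) − G(u_k^n) with u_k^0 = u⁰ for all k. Then the parareal method is exact after n iterations: for all natural numbers k and n with n ≤ k, u_kⁿ = Fⁿ(u⁰), where Fⁿ denotes the n-fold iterate of F. -/
/-- Exactness of the classical parareal algorithm: if the iterates satisfy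
`u 0 (n+1) = G (u 0 n)`, `u k 0 = u⁰` for all `k`, and the parareal correction
`u (k+1) (n+1) = G (u (k+1) n) + F (u k n) − G (u k n)`, then `u k n = F^[n] u⁰`
whenever `n ≤ k`. -/
theorem parareal_exactness
    {E : Type*} [AddCommGroup E]
    (F G : E → E) (u0 : E) (u : ℕ → ℕ → E)
    (h_init : ∀ k, u k 0 = u0)
    (h_iter0 : ∀ n, u 0 (n + 1) = G (u 0 n))
    (h_iter : ∀ k n, u (k + 1) (n + 1) = G (u (k + 1) n) + F (u k n) - G (u k n)) :
    ∀ k n, n ≤ k → u k n = F^[n] u0 := by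
  intro k
  induction k with
  | zero =>
    intro n hn
    obtain rfl : n = 0 := Nat.le_zero.mp hn
    exact h_init 0
  | succ k ihk =>
    intro n
    induction n with
    | zero => exact fun _ => h_init (k + 1)
    | succ n ihn =>
      intro hn
      -- Iterates `k` and `k + 1` both equal `F^[n] u0` at step `n`, so the `G` terms cancel.
      rw [h_iter, ihn (by omega), ihk n (by omega), add_sub_cancel_left,
        Function.iterate_succ_apply']
end

section
/- Let X be a type (the microscopic state space), F : X → X a micro propagator, G : ℝ → ℝ a macro propagator, R : X → ℝ a restriction operator, and P : ℝ → X → X a matching operator that is self-consistent, i.e., for all x ∈ X and a ∈ ℝ, R(x) = a implies P(a, x) = x. Let 𝐓⁰ ∈ X and define the micro/macro parareal iterates by: 𝐓_k⁰ = 𝐓⁰ and T_k⁰ = R(𝐓⁰) for all k; T₀ⁿ⁺¹ = G(T₀ⁿ) and 𝐓₀ⁿ⁺¹ arbitrary for the 0-th iterate is replaced in later iterates by: T_{k+1}^{n+1} = G(T_{k+1}^n) + R(F(𝐓_k^n)) − G(T_k^n) and 𝐓_{k+1}^{n+1} = P(T_{k+1}^{n+1}, F(𝐓_k^n)). Then for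 all k ≥ 1 and all n ≤ k: 𝐓_kⁿ = Fⁿ(𝐓⁰) and T_kⁿ = R(Fⁿ(𝐓⁰)), where Fⁿ is the n-fold iterate of F. -/
/-!
Once iterations `k` and `k + 1` both carry the exact macro value at time `n`, the coarse terms in the
parareal correction cancel, so the macro value of iteration `k + 1` at time `n + 1` is the restriction
of the fine propagation of an exact micro state. That state is then already consistent with
the macro value, so self-consistency makes the matching operator leave it unchanged. Exactness thus
spreads by induction on the iteration index and, within it, on the time index.
-/

/-- Exactness of the micro/macro parareal algorithm with a self-consistent
matching operator: for all `k ≥ 1` and `n ≤ k`, the micro iterate equals the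
`n`-fold fine propagation of the initial state and the macro iterate equals
its restriction. -/
theorem micro_macro_parareal_exactness
    {X : Type*} (F : X → X) (G : ℝ → ℝ) (R : X → ℝ) (P : ℝ → X → X)
    (hP_self_consistent : ∀ (x : X) (a : ℝ), R x = a → P a x = x)
    (T0 : X) (Tm : ℕ → ℕ → X) (Tc : ℕ → ℕ → ℝ)
    (h_micro_init : ∀ k, Tm k 0 = T0)
    (h_macro_init : ∀ k, Tc k 0 = R T0)
    (h_macro_iter0 : ∀ n, Tc 0 (n + 1) = G (Tc 0 n))
    (h_macro_iter : ∀ k n,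
      Tc (k + 1) (n + 1) = G (Tc (k + 1) n) + R (F (Tm k n)) - G (Tc k n))
    (h_micro_iter : ∀ k n,
      Tm (k + 1) (n + 1) = P (Tc (k + 1) (n + 1)) (F (Tm k n))) :
    ∀ k n, 1 ≤ k → n ≤ k → Tm k n = F^[n] T0 ∧ Tc k n = R (F^[n] T0) := by
  -- Including `k = 0` makes the induction on the iteration index start.
  have key : ∀ k n, n ≤ k → Tm k n = F^[n] T0 ∧ Tc k n = R (F^[n] T0) := by
    intro k
    induction k with
    | zero =>
      intro n hn
      obtain rfl : n = 0 := by omega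
      exact ⟨h_micro_init 0, h_macro_init 0⟩
    | succ k ihk =>
      intro n
      induction n with
      | zero => exact fun _ => ⟨h_micro_init _, h_macro_init _⟩
      | succ n ihn =>
        intro hn
        obtain ⟨hm, hc⟩ := ihk n (by omega)
        obtain ⟨-, hc'⟩ := ihn (by omega)
        -- The two coarse propagations start from the same macro value and cancel.
        have hmac : Tc (k + 1) (n + 1) = R (F^[n + 1] T0) := by
          rw [h_macro_iter, hc', hc, hm, Function.iterate_succ_apply']
          ring
        refine ⟨?_, hmac⟩
        rw [h_micro_iter, hmac, hm, ← Function.iterate_succ_apply' F]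
        exact hP_self_consistent _ _ rfl
  exact fun k n _ hn => key k n hn
end

section
/- Let T_s ∈ ℝ, let g : ℝ → ℝ satisfy g(y) > 0 for every y > T_s, and let f : ℝ → ℝ be such that f has derivative g(f(t)) at every t ≥ 0 and f(0) > T_s. Then f(t) > T_s for all t ≥ 0; i.e., the open interval (T_s, ∞) is forward-invariant for the ODE T' = g(T). -/
/-- Forward invariance of `(T_s, ∞)` for the ODE `T' = g(T)`: if `g(y) > 0` for all
`y > T_s` and the solution starts above `T_s`, it stays above `T_s` for all `t ≥ 0`. -/
theorem forward_invariance_above_threshold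
    (Ts : ℝ) (g : ℝ → ℝ) (hg : ∀ y : ℝ, Ts < y → 0 < g y)
    (f : ℝ → ℝ) (hf : ∀ t : ℝ, 0 ≤ t → HasDerivAt f (g (f t)) t)
    (h0 : Ts < f 0) :
    ∀ t : ℝ, 0 ≤ t → Ts < f t := by
  intro t ht
  -- The constant `f 0` is a lower fence for `f`: wherever `f x = f 0 > Ts`, the slope `g (f x)`
  -- is positive, so `f` never drops below its initial value.
  have key : f 0 ≤ f t :=
    image_le_of_deriv_right_lt_deriv_boundary' (f := fun _ => f 0) (f' := fun _ => 0)
      (B := f) (B' := fun x => g (f x)) (a := 0) (b := t)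
      continuousOn_const (fun x _ => hasDerivWithinAt_const x _ (f 0)) le_rfl
      (fun x hx => (hf x hx.1).continuousAt.continuousWithinAt)
      (fun x hx => (hf x hx.1).hasDerivWithinAt)
      (fun x _ hx => hg _ (hx ▸ h0)) ⟨ht, le_rfl⟩
  exact h0.trans_le key
end
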